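/- arXiv:2510.13640 — 2 statements merged into one kernel-verified Lean document; each statement's English description precedes it below -/
import Mathlib

section
/- Every function F : P_1(ℝ) → ℝ of class C^1 is Dawson-differentiable at every m ∈ P_1(ℝ) with respect to every x ∈ ℝ, and its Dawson derivative coincides with its canonical derivative: ΔF(m,x) = δF(m,x); in particular ∫_ℝ ΔF(m,x) dm(x) = 0 for every m ∈ P_1(ℝ). -/
open MeasureTheory Filter Topology

noncomputable section

/-- `π` is a coupling of the measures `m` and `μ` on `ℝ`. -/
def IsCoupling (π : Measure (ℝ × ℝ)) (m μ : Measure ℝ) : Prop :=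
  π.map Prod.fst = m ∧ π.map Prod.snd = μ

/-- The Wasserstein distance of order one between two measures on `ℝ`:
the infimum over couplings `π` of `∫ |x - y| dπ(x,y)`. -/
def W1 (m μ : Measure ℝ) : ℝ :=
  sInf {c : ℝ | ∃ π : Measure (ℝ × ℝ), IsCoupling π m μ ∧ c = ∫ p, |p.1 - p.2| ∂π}

/-- Membership in `P₁(ℝ)`: Borel probability measures on `ℝ` with finite first moment. -/
def MemP1 (m : Measure ℝ) : Prop :=
  IsProbabilityMeasure m ∧ Integrable (fun x => |x|) m

/-- Membership in `P([-K,K])`: probability measures supported in `[-K,K]`. -/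
def MemPK (K : ℝ) (m : Measure ℝ) : Prop :=
  IsProbabilityMeasure m ∧ m (Set.Icc (-K) K)ᶜ = 0

/-- The convex combination `(1-t)·m₀ + t·m` of two measures. -/
def lineSeg (m₀ m : Measure ℝ) (t : ℝ) : Measure ℝ :=
  ENNReal.ofReal (1 - t) • m₀ + ENNReal.ofReal t • m

/-- The integral of `f` against the signed difference `m - μ`:
`∫ f d(m - μ) = ∫ f dm - ∫ f dμ`. -/
def dInt (f : ℝ → ℝ) (m μ : Measure ℝ) : ℝ := (∫ x, f x ∂m) - ∫ x, f x ∂μ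

/-- `W₁`-(sequential) compactness of a subset of `P₁(ℝ)`. -/
def W1Compact (𝒦 : Set (Measure ℝ)) : Prop :=
  (∀ m ∈ 𝒦, MemP1 m) ∧
  ∀ u : ℕ → Measure ℝ, (∀ n, u n ∈ 𝒦) →
    ∃ m ∈ 𝒦, ∃ φ : ℕ → ℕ, StrictMono φ ∧
      Tendsto (fun n => W1 (u (φ n)) m) atTop (𝓝 0)

/-- Sublinearity in the real variable, uniformly over `W₁`-compact sets of measures. -/
def SublinearOnCompacts (G : Measure ℝ → ℝ → ℝ) : Prop :=
  ∀ 𝒦 : Set (Measure ℝ), W1Compact 𝒦 →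
    ∃ C > 0, ∀ m ∈ 𝒦, ∀ x : ℝ, |G m x| ≤ C * (1 + |x|)

/-- `W₁`-continuity of a function of the measure variable at a point of `P₁(ℝ)`. -/
def W1ContinuousAt (g : Measure ℝ → ℝ) (m : Measure ℝ) : Prop :=
  ∀ ε > 0, ∃ η > 0, ∀ μ, MemP1 μ → W1 μ m < η → |g μ - g m| < ε

/-- Joint continuity of `G : P₁(ℝ) × ℝ → ℝ`. -/
def JointlyContinuous (G : Measure ℝ → ℝ → ℝ) : Prop :=
  ∀ m x, MemP1 m → ∀ ε > 0, ∃ η > 0, ∀ μ y, MemP1 μ →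
    W1 μ m < η → |y - x| < η → |G μ y - G m x| < ε

/-- Joint continuity of `G : P₁(ℝ) × ℝ × ℝ → ℝ`. -/
def JointlyContinuous2 (G : Measure ℝ → ℝ → ℝ → ℝ) : Prop :=
  ∀ m x y, MemP1 m → ∀ ε > 0, ∃ η > 0, ∀ μ x' y', MemP1 μ →
    W1 μ m < η → |x' - x| < η → |y' - y| < η → |G μ x' y' - G m x y| < ε

/-- `H` is a version of the (linear functional) derivative of `F : P₁(ℝ) → ℝ`. -/
def IsDerivVersion (F : Measure ℝ → ℝ) (H : Measure ℝ → ℝ → ℝ) : Prop :=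
  Measurable (Function.uncurry H) ∧
  SublinearOnCompacts H ∧
  ∀ m m₀, MemP1 m → MemP1 m₀ →
    F m - F m₀ = ∫ t in (0:ℝ)..1, dInt (H (lineSeg m₀ m t)) m m₀

/-- `H` is the canonical derivative of `F : P₁(ℝ) → ℝ`: the version of the derivative
satisfying `∫ H(μ,x) dμ(x) = 0` for every `μ ∈ P₁(ℝ)`. -/
def IsCanonicalDeriv (F : Measure ℝ → ℝ) (H : Measure ℝ → ℝ → ℝ) : Prop :=
  IsDerivVersion F H ∧ ∀ μ, MemP1 μ → ∫ x, H μ x ∂μ = 0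

/-- `G : P₁(ℝ) × ℝ → ℝ` is of class `C^{0,1}`. -/
def IsC01 (G : Measure ℝ → ℝ → ℝ) : Prop :=
  (∀ m, MemP1 m → ContDiff ℝ 1 (G m)) ∧
  (∀ x : ℝ, ∀ m, MemP1 m → W1ContinuousAt (fun μ => G μ x) m) ∧
  SublinearOnCompacts G ∧
  JointlyContinuous (fun m x => deriv (G m) x)

/-- `F : P₁(ℝ) → ℝ` is of class `C¹` with canonical derivative `H`. -/
def IsC1 (F : Measure ℝ → ℝ) (H : Measure ℝ → ℝ → ℝ) : Prop :=
  IsCanonicalDeriv F H ∧ IsC01 H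

/-- Joint continuity on `P([-K,K]) × [-K,K]`. -/
def JointlyContinuousOnK (K : ℝ) (G : Measure ℝ → ℝ → ℝ) : Prop :=
  ∀ m x, MemPK K m → x ∈ Set.Icc (-K) K → ∀ ε > 0, ∃ η > 0,
    ∀ μ y, MemPK K μ → y ∈ Set.Icc (-K) K → W1 μ m < η → |y - x| < η →
      |G μ y - G m x| < ε

/-- Joint continuity on `P([-K,K]) × [-K,K]²`. -/
def JointlyContinuousOnK2 (K : ℝ) (G : Measure ℝ → ℝ → ℝ → ℝ) : Prop :=
  ∀ m x y, MemPK K m → x ∈ Set.Icc (-K) K → y ∈ Set.Icc (-K) K → ∀ ε > 0, ∃ η > 0,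
    ∀ μ x' y', MemPK K μ → x' ∈ Set.Icc (-K) K → y' ∈ Set.Icc (-K) K →
      W1 μ m < η → |x' - x| < η → |y' - y| < η → |G μ x' y' - G m x y| < ε

end

/-!
By the definition of a derivative version, applied along the segment `m_s = (1 - s) m₀ + s m`,
`F(m_s) - F(m₀) = s ∫₀¹ ∫ H(m_{ts}, ·) d(m - m₀) dt = ∫₀ˢ ∫ H(m_r, ·) d(m - m₀) dr`.
The segment is a Lipschitz image of `[0, 1]`, hence `W₁`-compact, so the sublinear bound on `H` is
uniform along it and dominated convergence makes the integrand continuous at `r = 0`. The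
fundamental theorem of calculus then gives the one-sided derivative `∫ H(m₀, ·) d(m - m₀)`.
For `m = δ_x` and the canonical derivative, the term `∫ H(m₀, ·) dm₀` vanishes.
-/

section Coupling

variable {π π₁ π₂ : Measure (ℝ × ℝ)} {m m₁ m₂ μ μ₁ μ₂ : Measure ℝ}

lemma isCoupling_diag (m : Measure ℝ) : IsCoupling (m.map fun x => (x, x)) m m := by
  have hdiag : Measurable fun x : ℝ => (x, x) := by fun_prop
  exact ⟨(Measure.map_map measurable_fst hdiag).trans Measure.map_id,
    (Measure.map_map measurable_snd hdiag).trans Measure.map_id⟩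

lemma isCoupling_prod (m μ : Measure ℝ) [IsProbabilityMeasure m] [IsProbabilityMeasure μ] :
    IsCoupling (m.prod μ) m μ := by
  constructor <;> simp

lemma IsCoupling.add (h₁ : IsCoupling π₁ m₁ μ₁) (h₂ : IsCoupling π₂ m₂ μ₂) :
    IsCoupling (π₁ + π₂) (m₁ + m₂) (μ₁ + μ₂) :=
  ⟨by rw [Measure.map_add _ _ measurable_fst, h₁.1, h₂.1],
    by rw [Measure.map_add _ _ measurable_snd, h₁.2, h₂.2]⟩

lemma IsCoupling.smul (h : IsCoupling π m μ) (c : ENNReal) :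
    IsCoupling (c • π) (c • m) (c • μ) :=
  ⟨by rw [Measure.map_smul, h.1], by rw [Measure.map_smul, h.2]⟩

lemma IsCoupling.swap (h : IsCoupling π m μ) : IsCoupling (π.map Prod.swap) μ m :=
  ⟨(Measure.map_map measurable_fst measurable_swap).trans h.2,
    (Measure.map_map measurable_snd measurable_swap).trans h.1⟩

end Coupling

section Wasserstein

variable {π : Measure (ℝ × ℝ)} {m μ : Measure ℝ}

lemma W1_nonneg (m μ : Measure ℝ) : 0 ≤ W1 m μ := by
  refine Real.sInf_nonneg ?_
  rintro _ ⟨π, -, rfl⟩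
  exact integral_nonneg fun p => abs_nonneg _

lemma W1_le_integral (h : IsCoupling π m μ) : W1 m μ ≤ ∫ p, |p.1 - p.2| ∂π := by
  refine csInf_le ⟨0, ?_⟩ ⟨π, h, rfl⟩
  rintro _ ⟨π', -, rfl⟩
  exact integral_nonneg fun p => abs_nonneg _

lemma W1_comm (m μ : Measure ℝ) : W1 m μ = W1 μ m := by
  have cost_swap (π : Measure (ℝ × ℝ)) :
      ∫ p, |p.1 - p.2| ∂π = ∫ p, |p.1 - p.2| ∂(π.map Prod.swap) := by
    rw [integral_map measurable_swap.aemeasurable (by fun_prop)]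
    simp only [Prod.fst_swap, Prod.snd_swap, abs_sub_comm]
  unfold W1
  congr 1
  ext c
  constructor <;> rintro ⟨π, hπ, rfl⟩ <;> exact ⟨π.map Prod.swap, hπ.swap, cost_swap π⟩

-- The common part `κ` is transported along the diagonal, at no cost.
lemma W1_add_smul_le (h : IsCoupling π m μ) (hπ : Integrable (fun p => |p.1 - p.2|) π)
    (κ : Measure ℝ) {c : ℝ} (hc : 0 ≤ c) :
    W1 (κ + ENNReal.ofReal c • m) (κ + ENNReal.ofReal c • μ) ≤ c * ∫ p, |p.1 - p.2| ∂π := by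
  have hdiag : AEMeasurable (fun x : ℝ => (x, x)) κ := by fun_prop
  have cost_diag : ∫ p : ℝ × ℝ, |p.1 - p.2| ∂(κ.map fun x => (x, x)) = 0 := by
    rw [integral_map hdiag (by fun_prop)]
    simp
  have integrable_diag : Integrable (fun p : ℝ × ℝ => |p.1 - p.2|) (κ.map fun x => (x, x)) := by
    rw [integrable_map_measure (by fun_prop) hdiag]
    simp [Function.comp_def]
  refine (W1_le_integral ((isCoupling_diag κ).add (h.smul _))).trans_eq ?_
  rw [integral_add_measure integrable_diag (hπ.smul_measure ENNReal.ofReal_ne_top), cost_diag,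
    integral_smul_measure, ENNReal.toReal_ofReal hc, zero_add, smul_eq_mul]

lemma W1ContinuousAt.tendsto {ι : Type*} {l : Filter ι} {g : Measure ℝ → ℝ} {u : ι → Measure ℝ}
    (hg : W1ContinuousAt g m) (hu : ∀ᶠ i in l, MemP1 (u i))
    (hW : Tendsto (fun i => W1 (u i) m) l (𝓝 0)) : Tendsto (fun i => g (u i)) l (𝓝 (g m)) := by
  refine Metric.tendsto_nhds.2 fun ε hε => ?_
  obtain ⟨η, hη, hball⟩ := hg ε hε
  filter_upwards [hu, hW.eventually_lt_const hη] with i hi hlt using hball _ hi hlt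

end Wasserstein

section FirstMoment

variable {m μ : Measure ℝ}

lemma memP1_dirac (x : ℝ) : MemP1 (Measure.dirac x) :=
  ⟨inferInstance, integrable_dirac (by simp)⟩

lemma MemP1.integrable_one_add_abs (hm : MemP1 m) (C : ℝ) :
    Integrable (fun x => C * (1 + |x|)) m :=
  have := hm.1
  ((integrable_const 1).add hm.2).const_mul C

lemma MemP1.integrable_abs_sub (hm : MemP1 m) (hμ : MemP1 μ) :
    Integrable (fun p => |p.1 - p.2|) (m.prod μ) := by
  have := hm.1
  have := hμ.1
  have integrable_id {ν : Measure ℝ} (hν : MemP1 ν) : Integrable (fun x => x) ν :=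
    (integrable_norm_iff (by fun_prop)).1 hν.2
  exact (((integrable_id hm).comp_fst μ).sub ((integrable_id hμ).comp_snd m)).abs

end FirstMoment

section Segment

variable {m₀ m : Measure ℝ}

@[simp]
lemma lineSeg_zero (m₀ m : Measure ℝ) : lineSeg m₀ m 0 = m₀ := by
  simp [lineSeg]

lemma lineSeg_lineSeg (m₀ m : Measure ℝ) {s t : ℝ} (hs : s ∈ Set.Icc 0 1)
    (ht : t ∈ Set.Icc 0 1) : lineSeg m₀ (lineSeg m₀ m s) t = lineSeg m₀ m (t * s) := by
  have hcoeff : ENNReal.ofReal (1 - t) + ENNReal.ofReal (t * (1 - s)) =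
      ENNReal.ofReal (1 - t * s) := by
    rw [← ENNReal.ofReal_add (sub_nonneg.2 ht.2) (mul_nonneg ht.1 (sub_nonneg.2 hs.2))]
    ring_nf
  simp only [lineSeg, smul_add, smul_smul]
  rw [← add_assoc, ← add_smul, ← ENNReal.ofReal_mul ht.1, ← ENNReal.ofReal_mul ht.1, hcoeff]

lemma measurable_lineSeg (m₀ m : Measure ℝ) : Measurable (lineSeg m₀ m) := by
  refine Measure.measurable_of_measurable_coe _ fun s _ => ?_
  simp only [lineSeg, Measure.add_apply, Measure.smul_apply, smul_eq_mul]
  fun_prop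

lemma memP1_lineSeg (hm₀ : MemP1 m₀) (hm : MemP1 m) {s : ℝ} (hs : s ∈ Set.Icc 0 1) :
    MemP1 (lineSeg m₀ m s) := by
  have := hm₀.1
  have := hm.1
  refine ⟨⟨?_⟩, (hm₀.2.smul_measure ENNReal.ofReal_ne_top).add_measure
    (hm.2.smul_measure ENNReal.ofReal_ne_top)⟩
  simp [lineSeg, ← ENNReal.ofReal_add (sub_nonneg.2 hs.2) hs.1]

lemma dInt_lineSeg {f : ℝ → ℝ} (hm₀ : Integrable f m₀) (hm : Integrable f m) {s : ℝ}
    (hs : s ∈ Set.Icc 0 1) : dInt f (lineSeg m₀ m s) m₀ = s * dInt f m m₀ := by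
  rw [dInt, dInt, lineSeg, integral_add_measure (hm₀.smul_measure ENNReal.ofReal_ne_top)
    (hm.smul_measure ENNReal.ofReal_ne_top), integral_smul_measure, integral_smul_measure,
    ENNReal.toReal_ofReal (sub_nonneg.2 hs.2), ENNReal.toReal_ofReal hs.1, smul_eq_mul,
    smul_eq_mul]
  ring

lemma W1_lineSeg_lineSeg_le (hm₀ : MemP1 m₀) (hm : MemP1 m) {r s : ℝ} (hr : r ∈ Set.Icc 0 1)
    (hs : s ∈ Set.Icc 0 1) :
    W1 (lineSeg m₀ m s) (lineSeg m₀ m r) ≤ |s - r| * ∫ p, |p.1 - p.2| ∂(m.prod m₀) := by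
  wlog hrs : r ≤ s generalizing r s
  · rw [W1_comm, abs_sub_comm]
    exact this hs hr (le_of_not_ge hrs)
  have := hm₀.1
  have := hm.1
  set κ := ENNReal.ofReal (1 - s) • m₀ + ENNReal.ofReal r • m
  have lineSeg_s : lineSeg m₀ m s = κ + ENNReal.ofReal (s - r) • m := by
    rw [add_assoc, ← add_smul, ← ENNReal.ofReal_add hr.1 (sub_nonneg.2 hrs),
      add_sub_cancel, lineSeg]
  have lineSeg_r : lineSeg m₀ m r = κ + ENNReal.ofReal (s - r) • m₀ := by
    rw [add_right_comm, ← add_smul,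
      ← ENNReal.ofReal_add (sub_nonneg.2 hs.2) (sub_nonneg.2 hrs), sub_add_sub_cancel, lineSeg]
  rw [lineSeg_s, lineSeg_r, abs_of_nonneg (sub_nonneg.2 hrs)]
  exact W1_add_smul_le (isCoupling_prod m m₀) (hm.integrable_abs_sub hm₀) κ (sub_nonneg.2 hrs)

lemma tendsto_W1_lineSeg (hm₀ : MemP1 m₀) (hm : MemP1 m) {r : ℝ} (hr : r ∈ Set.Icc 0 1) :
    Tendsto (fun s => W1 (lineSeg m₀ m s) (lineSeg m₀ m r)) (𝓝[Set.Icc 0 1] r) (𝓝 0) := by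
  have hbound : Tendsto (fun s => |s - r| * ∫ p, |p.1 - p.2| ∂(m.prod m₀))
      (𝓝[Set.Icc 0 1] r) (𝓝 0) := by
    refine (Continuous.tendsto' ?_ r 0 ?_).mono_left nhdsWithin_le_nhds
    · fun_prop
    · simp
  refine squeeze_zero' (Eventually.of_forall fun s => W1_nonneg _ _) ?_ hbound
  filter_upwards [self_mem_nhdsWithin] with s hs using W1_lineSeg_lineSeg_le hm₀ hm hr hs

lemma w1Compact_lineSeg_image (hm₀ : MemP1 m₀) (hm : MemP1 m) :
    W1Compact (lineSeg m₀ m '' Set.Icc 0 1) := by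
  refine ⟨Set.forall_mem_image.2 fun s hs => memP1_lineSeg hm₀ hm hs, fun u hu => ?_⟩
  choose s hs hsu using hu
  obtain ⟨r, hr, φ, hφ, hlim⟩ := isCompact_Icc.tendsto_subseq hs
  refine ⟨_, Set.mem_image_of_mem _ hr, φ, hφ, ?_⟩
  simp only [← hsu]
  exact (tendsto_W1_lineSeg hm₀ hm hr).comp
    (tendsto_nhdsWithin_iff.2 ⟨hlim, Eventually.of_forall fun n => hs (φ n)⟩)

lemma SublinearOnCompacts.exists_bound_lineSeg {H : Measure ℝ → ℝ → ℝ}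
    (hH : SublinearOnCompacts H) (hm₀ : MemP1 m₀) (hm : MemP1 m) :
    ∃ C, ∀ s ∈ Set.Icc (0 : ℝ) 1, ∀ x, |H (lineSeg m₀ m s) x| ≤ C * (1 + |x|) := by
  obtain ⟨C, -, hC⟩ := hH _ (w1Compact_lineSeg_image hm₀ hm)
  exact ⟨C, fun s hs => hC _ (Set.mem_image_of_mem _ hs)⟩

end Segment

section Derivative

variable {F : Measure ℝ → ℝ} {H : Measure ℝ → ℝ → ℝ} {m₀ m ρ : Measure ℝ}

lemma stronglyMeasurable_integral_lineSeg (hH : Measurable (Function.uncurry H))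
    (m₀ m ρ : Measure ℝ) [SFinite ρ] :
    StronglyMeasurable fun s => ∫ x, H (lineSeg m₀ m s) x ∂ρ := by
  have hjoint : Measurable fun p : ℝ × ℝ => H (lineSeg m₀ m p.1) p.2 :=
    hH.comp (((measurable_lineSeg m₀ m).comp measurable_fst).prodMk measurable_snd)
  exact hjoint.stronglyMeasurable.integral_prod_right'

lemma continuousWithinAt_integral_lineSeg (hmeas : Measurable (Function.uncurry H))
    (hsub : SublinearOnCompacts H) (hm₀ : MemP1 m₀) (hm : MemP1 m) (hρ : MemP1 ρ) {r : ℝ}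
    (hr : r ∈ Set.Icc 0 1) (hcont : ∀ x, W1ContinuousAt (fun μ => H μ x) (lineSeg m₀ m r)) :
    ContinuousWithinAt (fun s => ∫ x, H (lineSeg m₀ m s) x ∂ρ) (Set.Icc 0 1) r := by
  obtain ⟨C, hC⟩ := hsub.exists_bound_lineSeg hm₀ hm
  refine tendsto_integral_filter_of_dominated_convergence _ ?_ ?_
    (hρ.integrable_one_add_abs C) ?_
  · exact Eventually.of_forall fun s => hmeas.of_uncurry_left.aestronglyMeasurable
  · filter_upwards [self_mem_nhdsWithin] with s hs using ae_of_all _ (hC s hs)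
  · refine ae_of_all _ fun x => (hcont x).tendsto ?_ (tendsto_W1_lineSeg hm₀ hm hr)
    filter_upwards [self_mem_nhdsWithin] with s hs using memP1_lineSeg hm₀ hm hs

lemma IsDerivVersion.sub_eq_integral_lineSeg (hH : IsDerivVersion F H) (hm₀ : MemP1 m₀)
    (hm : MemP1 m) {s : ℝ} (hs : s ∈ Set.Icc 0 1) :
    F (lineSeg m₀ m s) - F m₀ = ∫ r in 0..s, dInt (H (lineSeg m₀ m r)) m m₀ := by
  obtain ⟨hmeas, hsub, hderiv⟩ := hH
  obtain ⟨C, hC⟩ := hsub.exists_bound_lineSeg hm₀ hm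
  have integrable_lineSeg {r : ℝ} (hr : r ∈ Set.Icc 0 1) {ρ : Measure ℝ} (hρ : MemP1 ρ) :
      Integrable (H (lineSeg m₀ m r)) ρ :=
    (hρ.integrable_one_add_abs C).mono' hmeas.of_uncurry_left.aestronglyMeasurable
      (ae_of_all _ (hC r hr))
  calc F (lineSeg m₀ m s) - F m₀
      = ∫ t in (0 : ℝ)..1, dInt (H (lineSeg m₀ (lineSeg m₀ m s) t)) (lineSeg m₀ m s) m₀ :=
        hderiv _ _ (memP1_lineSeg hm₀ hm hs) hm₀
    _ = ∫ t in (0 : ℝ)..1, s * dInt (H (lineSeg m₀ m (t * s))) m m₀ := by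
        refine intervalIntegral.integral_congr fun t ht => ?_
        rw [Set.uIcc_of_le zero_le_one] at ht
        have hts : t * s ∈ Set.Icc (0 : ℝ) 1 :=
          ⟨mul_nonneg ht.1 hs.1, mul_le_one₀ ht.2 hs.1 hs.2⟩
        simp only [lineSeg_lineSeg m₀ m hs ht]
        exact dInt_lineSeg (integrable_lineSeg hts hm₀) (integrable_lineSeg hts hm) hs
    _ = ∫ r in 0..s, dInt (H (lineSeg m₀ m r)) m m₀ := by
        rw [intervalIntegral.integral_const_mul, ← smul_eq_mul,
          intervalIntegral.smul_integral_comp_mul_right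
            (fun r => dInt (H (lineSeg m₀ m r)) m m₀), zero_mul, one_mul]

lemma IsDerivVersion.hasDerivWithinAt_lineSeg (hH : IsDerivVersion F H) (hm₀ : MemP1 m₀)
    (hm : MemP1 m) (hcont : ∀ x, W1ContinuousAt (fun μ => H μ x) m₀) :
    HasDerivWithinAt (fun s => F (lineSeg m₀ m s)) (dInt (H m₀) m m₀) (Set.Ici 0) 0 := by
  have := hm₀.1
  have := hm.1
  set g : ℝ → ℝ := fun r => dInt (H (lineSeg m₀ m r)) m m₀
  have hg_meas : StronglyMeasurable g :=
    (stronglyMeasurable_integral_lineSeg hH.1 m₀ m m).sub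
      (stronglyMeasurable_integral_lineSeg hH.1 m₀ m m₀)
  have hg_cont : ContinuousWithinAt g (Set.Ioi 0) 0 := by
    have hcont_integral {ρ : Measure ℝ} (hρ : MemP1 ρ) :
        ContinuousWithinAt (fun s => ∫ x, H (lineSeg m₀ m s) x ∂ρ) (Set.Icc 0 1) 0 :=
      continuousWithinAt_integral_lineSeg hH.1 hH.2.1 hm₀ hm hρ (by simp) (by simpa)
    exact ((hcont_integral hm).sub (hcont_integral hm₀)).mono_of_mem_nhdsWithin
      (Icc_mem_nhdsGT zero_lt_one)
  have hFTC : HasDerivWithinAt (fun s => F m₀ + ∫ r in 0..s, g r) (g 0) (Set.Ici 0) 0 :=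
    (intervalIntegral.integral_hasDerivWithinAt_right IntervalIntegrable.refl
      hg_meas.stronglyMeasurableAtFilter hg_cont).const_add _
  have hF : (fun s => F (lineSeg m₀ m s)) =ᶠ[𝓝[≥] 0] fun s => F m₀ + ∫ r in 0..s, g r := by
    filter_upwards [Icc_mem_nhdsGE zero_lt_one] with s hs
    rw [← hH.sub_eq_integral_lineSeg hm₀ hm hs, add_sub_cancel]
  simpa [g] using hFTC.congr_of_eventuallyEq hF (by simp)

end Derivative

theorem stmt4_general {F : Measure ℝ → ℝ} {H : Measure ℝ → ℝ → ℝ} (hH : IsDerivVersion F H)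
    {m ν : Measure ℝ} (hm : MemP1 m) (hν : MemP1 ν)
    (hcont : ∀ x, W1ContinuousAt (fun μ => H μ x) m) :
    Tendsto (fun ε => (F (lineSeg m ν ε) - F m) / ε) (𝓝[>] 0) (𝓝 (dInt (H m) ν m)) := by
  simpa [slope_fun_def_field] using (hasDerivWithinAt_iff_tendsto_slope' Set.self_notMem_Ioi).1
    (hH.hasDerivWithinAt_lineSeg hm hν hcont).Ioi_of_Ici

/-- every `C¹` function `F : P₁(ℝ) → ℝ` is Dawson-differentiable at every
`m ∈ P₁(ℝ)` w.r.t. every `x ∈ ℝ`, with Dawson derivative `ΔF(m,x) = δF(m,x)`; in particular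
`∫ ΔF(m,x) dm(x) = 0`. -/
theorem stmt4 (F : Measure ℝ → ℝ) (δF : Measure ℝ → ℝ → ℝ) (hF : IsC1 F δF) :
    ∀ m, MemP1 m → ∀ x : ℝ,
      Tendsto (fun ε => (F (lineSeg m (Measure.dirac x) ε) - F m) / ε)
        (𝓝[>] (0:ℝ)) (𝓝 (δF m x)) ∧
      ∫ y, δF m y ∂m = 0 := by
  intro m hm x
  have hDawson := stmt4_general hF.1.1 hm (memP1_dirac x) fun y => hF.2.2.1 y m hm
  exact ⟨by simpa [dInt, hF.1.2 m hm] using hDawson, hF.1.2 m hm⟩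
end

section
/- Let K, n be positive integers with n ≥ K+1 and let m ∈ P([−K,K]). Set N := nK and define the open intervals I_{n,k} := ((k−1)/n, (k+1)/n) for −N+1 ≤ k ≤ N−1, I_{n,−N} := (−∞, (−N+1)/n) and I_{n,N} := ((N−1)/n, +∞). Let (ψ_{n,k})_{−N ≤ k ≤ N} be any family of C^∞ nonnegative functions ψ_{n,k} : ℝ → ℝ with supp ψ_{n,k} ⊆ I_{n,k} and Σ_{k=−N}^{N} ψ_{n,k}(x) = 1 for all x ∈ ℝ, and define the atomic measure m^{[n]} := Σ_{k=−N}^{N} (∫_ℝ ψ_{n,k}(x) dm(x)) · δ_{k/n}. Then W_1(m, m^{[n]}) ≤ 3/n. -/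
open MeasureTheory Filter Topology

/-- The interval `I_{n,k}` of the atomic approximation scheme: `((k-1)/n, (k+1)/n)` for
`-N < k < N`, with the extreme intervals extended to `-∞` and `+∞`. -/
def Ink (n : ℕ) (N k : ℤ) : Set ℝ :=
  if k = -N then Set.Iio ((((-N : ℤ) : ℝ) + 1) / n)
  else if k = N then Set.Ioi ((((N : ℤ) : ℝ) - 1) / n)
  else Set.Ioo (((k : ℝ) - 1) / n) (((k : ℝ) + 1) / n)

/-!
The partition of unity splits `m` into the measures `ψₖ m`, and transporting all of `ψₖ m` to
`k / n` is a coupling of `m` with `m^{[n]}`. A point of `Ink n N k` lying in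
`[-(N + 1) / n, (N + 1) / n]` is within `1 / n` of `k / n`, even for the two unbounded intervals,
so no mass travels further than `1 / n`.
-/

section Coupling

variable {π : Measure (ℝ × ℝ)} {m μ : Measure ℝ}

lemma W1_le_integral_of_isCoupling (hπ : IsCoupling π m μ) :
    W1 m μ ≤ ∫ p, |p.1 - p.2| ∂π := by
  refine csInf_le ⟨0, ?_⟩ ⟨π, hπ, rfl⟩
  rintro _ ⟨_, -, rfl⟩
  exact integral_nonneg fun _ => abs_nonneg _

lemma measure_univ_of_isCoupling (hπ : IsCoupling π m μ) : π Set.univ = m Set.univ := by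
  rw [← hπ.1, Measure.map_apply measurable_fst MeasurableSet.univ, Set.preimage_univ]

lemma W1_le_of_isCoupling_of_ae_abs_sub_le [IsFiniteMeasure m] {r : ℝ} (hπ : IsCoupling π m μ)
    (hr : ∀ᵐ p ∂π, |p.1 - p.2| ≤ r) : W1 m μ ≤ r * m.real Set.univ := by
  have hmass : π Set.univ = m Set.univ := measure_univ_of_isCoupling hπ
  have : IsFiniteMeasure π := ⟨hmass ▸ measure_lt_top m Set.univ⟩
  calc W1 m μ ≤ ∫ p, |p.1 - p.2| ∂π := W1_le_integral_of_isCoupling hπ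
    _ ≤ ‖∫ p, |p.1 - p.2| ∂π‖ := le_abs_self _
    _ ≤ r * π.real Set.univ := norm_integral_le_of_norm_le_const (by simpa using hr)
    _ = r * m.real Set.univ := by rw [measureReal_def, hmass, measureReal_def]

end Coupling

section PartitionCoupling

open scoped ENNReal

variable {α β ι : Type*} [MeasurableSpace α] [MeasurableSpace β] {s : Finset ι} {m : Measure α}
  {w : ι → α → ℝ≥0∞}

lemma sum_withDensity (hw : ∀ k ∈ s, AEMeasurable (w k) m) :
    ∑ k ∈ s, m.withDensity (w k) = m.withDensity fun x => ∑ k ∈ s, w k x := by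
  ext t ht
  simp only [Measure.finsetSum_apply, withDensity_apply _ ht]
  exact (lintegral_finsetSum' s fun k hk => (hw k hk).restrict).symm

/-- The transport plan that splits `m` according to the weights `w k` and sends the whole of the
`k`-th piece to the point `a k`. When the weights sum to `1` it is a coupling of `m` with an atomic
measure carried by the points `a k`. -/
noncomputable def partitionCoupling (s : Finset ι) (m : Measure α) (w : ι → α → ℝ≥0∞) (a : ι → β) :
    Measure (α × β) :=
  ∑ k ∈ s, (m.withDensity (w k)).map fun x => (x, a k)

lemma map_partitionCoupling {γ : Type*} [MeasurableSpace γ] {g : α × β → γ} (hg : Measurable g)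
    (a : ι → β) :
    (partitionCoupling s m w a).map g =
      ∑ k ∈ s, (m.withDensity (w k)).map fun x => g (x, a k) := by
  rw [partitionCoupling, Measure.map_finset_sum hg.aemeasurable]
  exact Finset.sum_congr rfl fun k _ => Measure.map_map hg (by fun_prop)

lemma map_fst_partitionCoupling (hw : ∀ k ∈ s, AEMeasurable (w k) m)
    (hsum : ∀ᵐ x ∂m, ∑ k ∈ s, w k x = 1) (a : ι → β) :
    (partitionCoupling s m w a).map Prod.fst = m := by
  calc (partitionCoupling s m w a).map Prod.fst
      = ∑ k ∈ s, m.withDensity (w k) := by simp [map_partitionCoupling measurable_fst]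
    _ = m.withDensity fun x => ∑ k ∈ s, w k x := sum_withDensity hw
    _ = m.withDensity 1 := withDensity_congr_ae hsum
    _ = m := withDensity_one

lemma map_snd_partitionCoupling (a : ι → β) :
    (partitionCoupling s m w a).map Prod.snd =
      ∑ k ∈ s, (∫⁻ x, w k x ∂m) • Measure.dirac (a k) := by
  simp [map_partitionCoupling measurable_snd, Measure.map_const]

lemma ae_partitionCoupling {a : ι → β} {p : α × β → Prop} (hp : MeasurableSet {z | p z})
    (hw : ∀ k ∈ s, AEMeasurable (w k) m)
    (h : ∀ k ∈ s, ∀ᵐ x ∂m, w k x ≠ 0 → p (x, a k)) :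
    ∀ᵐ z ∂partitionCoupling s m w a, p z := by
  rw [partitionCoupling, ae_finsetSum_measure_iff]
  intro k hk
  rw [ae_map_iff (by fun_prop) hp, ae_withDensity_iff' (hw k hk)]
  exact h k hk

end PartitionCoupling

lemma integrable_of_nonneg_of_sum_eq_one {α ι : Type*} [MeasurableSpace α] {m : Measure α}
    [IsFiniteMeasure m] {s : Finset ι} {ψ : ι → α → ℝ} (hψmeas : ∀ k ∈ s, AEMeasurable (ψ k) m)
    (hψpos : ∀ k ∈ s, ∀ x, 0 ≤ ψ k x) (hψsum : ∀ x, ∑ k ∈ s, ψ k x = 1) {k : ι} (hk : k ∈ s) :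
    Integrable (ψ k) m := by
  refine .of_bound (hψmeas k hk).aestronglyMeasurable 1 (ae_of_all _ fun x => ?_)
  rw [Real.norm_of_nonneg (hψpos k hk x), ← hψsum x]
  exact Finset.single_le_sum (f := fun i => ψ i x) (fun i hi => hψpos i hi x) hk

lemma W1_sum_dirac_le {ι : Type*} {s : Finset ι} {m : Measure ℝ} [IsFiniteMeasure m]
    {ψ : ι → ℝ → ℝ} {a : ι → ℝ} {r : ℝ} (hψmeas : ∀ k ∈ s, AEMeasurable (ψ k) m)
    (hψpos : ∀ k ∈ s, ∀ x, 0 ≤ ψ k x) (hψsum : ∀ x, ∑ k ∈ s, ψ k x = 1)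
    (hr : ∀ k ∈ s, ∀ᵐ x ∂m, ψ k x ≠ 0 → |x - a k| ≤ r) :
    W1 m (∑ k ∈ s, ENNReal.ofReal (∫ x, ψ k x ∂m) • Measure.dirac (a k)) ≤
      r * m.real Set.univ := by
  let w k x := ENNReal.ofReal (ψ k x)
  have hw : ∀ k ∈ s, AEMeasurable (w k) m := fun k hk => (hψmeas k hk).ennreal_ofReal
  have hwsum (x : ℝ) : ∑ k ∈ s, w k x = 1 := by
    rw [← ENNReal.ofReal_sum_of_nonneg fun k hk => hψpos k hk x, hψsum, ENNReal.ofReal_one]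
  have hatoms : ∀ k ∈ s, ENNReal.ofReal (∫ x, ψ k x ∂m) = ∫⁻ x, w k x ∂m := fun k hk =>
    ofReal_integral_eq_lintegral_ofReal (integrable_of_nonneg_of_sum_eq_one hψmeas hψpos hψsum hk)
      (ae_of_all _ (hψpos k hk))
  have hcoupling : IsCoupling (partitionCoupling s m w a) m
      (∑ k ∈ s, ENNReal.ofReal (∫ x, ψ k x ∂m) • Measure.dirac (a k)) := by
    refine ⟨map_fst_partitionCoupling hw (ae_of_all _ hwsum) a, ?_⟩
    rw [map_snd_partitionCoupling]
    exact Finset.sum_congr rfl fun k hk => by rw [hatoms k hk]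
  refine W1_le_of_isCoupling_of_ae_abs_sub_le hcoupling
    (ae_partitionCoupling (measurableSet_le (by fun_prop) (by fun_prop)) hw fun k hk => ?_)
  filter_upwards [hr k hk] with x hx hwx
  exact hx fun h => hwx (by simp [w, h])

lemma abs_sub_div_le_of_mem_Ink {n : ℕ} {N k : ℤ} {x : ℝ} (hx : |x| ≤ (N + 1) / n)
    (hxk : x ∈ Ink n N k) : |x - k / n| ≤ 1 / n := by
  obtain ⟨hlower, hupper⟩ := abs_le.mp hx
  rw [add_div] at hlower hupper
  rw [abs_le]
  unfold Ink at hxk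
  split_ifs at hxk with hleft hright
  · subst hleft
    rw [Set.mem_Iio, add_div] at hxk
    push_cast [neg_div] at hxk ⊢
    constructor <;> linarith
  · subst hright
    rw [Set.mem_Ioi, sub_div] at hxk
    constructor <;> linarith
  · rw [Set.mem_Ioo, sub_div, add_div] at hxk
    constructor <;> linarith

theorem stmt6_general {K : ℝ} {n : ℕ} (hn : 0 < n) {m : Measure ℝ} (hm : MemPK K m)
    {N : ℤ} (hN : n * K ≤ N + 1) {ψ : ℤ → ℝ → ℝ}
    (hψmeas : ∀ k ∈ Finset.Icc (-N) N, AEMeasurable (ψ k) m)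
    (hψpos : ∀ k ∈ Finset.Icc (-N) N, ∀ x, 0 ≤ ψ k x)
    (hψsupp : ∀ k ∈ Finset.Icc (-N) N, Function.support (ψ k) ⊆ Ink n N k)
    (hψsum : ∀ x : ℝ, ∑ k ∈ Finset.Icc (-N) N, ψ k x = 1) :
    W1 m (∑ k ∈ Finset.Icc (-N) N,
        ENNReal.ofReal (∫ x, ψ k x ∂m) • Measure.dirac ((k : ℝ) / n)) ≤ 1 / n := by
  obtain ⟨_, hmK⟩ := hm
  have hn' : (0 : ℝ) < n := by exact_mod_cast hn
  have hgrid : ∀ᵐ x : ℝ ∂m, |x| ≤ (N + 1) / n := by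
    have hIcc : ∀ᵐ x ∂m, x ∈ Set.Icc (-K) K := mem_ae_iff.mpr hmK
    filter_upwards [hIcc] with x hx
    exact (abs_le.mpr hx).trans ((le_div_iff₀' hn').mpr hN)
  have hclose : ∀ k ∈ Finset.Icc (-N) N, ∀ᵐ x ∂m, ψ k x ≠ 0 → |x - k / n| ≤ 1 / n := by
    intro k hk
    filter_upwards [hgrid] with x hx hψx
    exact abs_sub_div_le_of_mem_Ink hx (hψsupp k hk hψx)
  simpa using W1_sum_dirac_le hψmeas hψpos hψsum hclose

/-- atomic approximation: for a subordinate smooth partition of unity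
`(ψ_{n,k})` and `m ∈ P([-K,K])`, the atomic measure
`m^{[n]} = Σ_k (∫ ψ_{n,k} dm) δ_{k/n}` satisfies `W₁(m, m^{[n]}) ≤ 3/n`. -/
theorem stmt6 (K n : ℕ) (hK : 0 < K) (hn : K + 1 ≤ n)
    (m : Measure ℝ) (hm : MemPK (K : ℝ) m)
    (N : ℤ) (hN : N = (n : ℤ) * K)
    (ψ : ℤ → ℝ → ℝ)
    (hψsmooth : ∀ k ∈ Finset.Icc (-N) N, ContDiff ℝ (⊤ : ℕ∞) (ψ k))
    (hψpos : ∀ k ∈ Finset.Icc (-N) N, ∀ x, 0 ≤ ψ k x)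
    (hψsupp : ∀ k ∈ Finset.Icc (-N) N, Function.support (ψ k) ⊆ Ink n N k)
    (hψsum : ∀ x : ℝ, ∑ k ∈ Finset.Icc (-N) N, ψ k x = 1) :
    W1 m (∑ k ∈ Finset.Icc (-N) N,
        ENNReal.ofReal (∫ x, ψ k x ∂m) • Measure.dirac ((k : ℝ) / n)) ≤ 3 / n := by
  have h := stmt6_general (by lia) hm (by simp [hN])
    (fun k hk => (hψsmooth k hk).continuous.aemeasurable) hψpos hψsupp hψsum
  exact h.trans (by gcongr; norm_num)
end
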